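/- arXiv:2102.02081 — 2 statements merged into one kernel-verified Lean document; each statement's English description precedes it below -/
import Mathlib

section
/- Let d ≥ 2 be an integer and let t be a positive integer dividing F_{d+1} + F_{d-1} + 1 + (-1)^d with gcd(t, F_d) = 1. Then for every integer q satisfying F_d · q + F_{d-1} + 1 ≡ 0 (mod t), the integer t divides both q^d + 1 and q^2 - q - 1, i.e., t divides gcd(q^d + 1, q^2 - q - 1). -/
/-!
Modulo `q ^ 2 - q - 1` one has `q ^ d = F_d q + F_{d-1}`, so once `t ∣ q ^ 2 - q - 1` is known,
`q ^ d + 1 ≡ F_d q + F_{d-1} + 1 ≡ 0 (mod t)`. To get `t ∣ q ^ 2 - q - 1`, substitute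
`F_d q ≡ -(F_{d-1} + 1)` into `F_d ^ 2 (q ^ 2 - q - 1)`: by Cassini's identity the result is
`F_{d+1} + F_{d-1} + 1 + (-1) ^ d ≡ 0`, and `F_d ^ 2` can be cancelled since it is coprime to `t`.
-/

section CommRing

variable {R : Type*} [CommRing R]

theorem fib_add_two_mul_fib_sub_fib_succ_sq (n : ℕ) :
    (Nat.fib (n + 2) : R) * Nat.fib n - (Nat.fib (n + 1) : R) ^ 2 = (-1) ^ (n + 1) := by
  have cassini :
      (Nat.fib (n + 2) : ℤ) * Nat.fib n - (Nat.fib (n + 1) : ℤ) ^ 2 = (-1) ^ (n + 1) := by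
    have h := Int.fib_succ_mul_fib_pred_sub_fib_sq (n + 1 : ℕ)
    rw [Int.natAbs_natCast] at h
    simpa [← Int.fib_natCast, add_assoc] using h
  exact_mod_cast congrArg (Int.cast : ℤ → R) cassini

theorem sq_sub_self_sub_one_dvd_pow_succ_sub_fib (q : R) (n : ℕ) :
    q ^ 2 - q - 1 ∣ q ^ (n + 1) - (Nat.fib (n + 1) * q + Nat.fib n) := by
  induction n with
  | zero => simp
  | succ n ih =>
    have step : q ^ (n + 2) - (Nat.fib (n + 2) * q + Nat.fib (n + 1)) =
        q * (q ^ (n + 1) - (Nat.fib (n + 1) * q + Nat.fib n)) +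
          (q ^ 2 - q - 1) * Nat.fib (n + 1) := by
      rw [Nat.fib_add_two]
      push_cast
      ring
    rw [step]
    exact dvd_add (ih.mul_left q) (dvd_mul_right _ _)

theorem fib_succ_sq_mul_sq_sub_self_sub_one (q : R) (n : ℕ) :
    (Nat.fib (n + 1) : R) ^ 2 * (q ^ 2 - q - 1) =
      (Nat.fib (n + 1) * q + Nat.fib n + 1) *
          (Nat.fib (n + 1) * q - Nat.fib n - 1 - Nat.fib (n + 1)) +
        (Nat.fib (n + 2) + Nat.fib n + 1 + (-1) ^ (n + 1)) := by
  rw [← fib_add_two_mul_fib_sub_fib_succ_sq, Nat.fib_add_two]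
  push_cast
  ring

theorem stmt_9_general {t q : R} {n : ℕ}
    (hlucas : t ∣ Nat.fib (n + 2) + Nat.fib n + 1 + (-1) ^ (n + 1))
    (hcop : IsCoprime t (Nat.fib (n + 1) : R))
    (hq : t ∣ Nat.fib (n + 1) * q + Nat.fib n + 1) :
    t ∣ q ^ (n + 1) + 1 ∧ t ∣ q ^ 2 - q - 1 := by
  have hquad : t ∣ q ^ 2 - q - 1 := by
    refine (hcop.pow_right (n := 2)).dvd_of_dvd_mul_left ?_
    rw [fib_succ_sq_mul_sq_sub_self_sub_one]
    exact dvd_add (hq.mul_right _) hlucas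
  have hpow : t ∣ q ^ (n + 1) - (Nat.fib (n + 1) * q + Nat.fib n) :=
    hquad.trans (sq_sub_self_sub_one_dvd_pow_succ_sub_fib q n)
  refine ⟨?_, hquad⟩
  convert dvd_add hpow hq using 1
  ring

end CommRing

/-- Conversely, if `t` divides `F_{d+1} + F_{d-1} + 1 + (-1)^d` and is coprime
to `F_d`, then for every `q` with `F_d q + F_{d-1} + 1 ≡ 0 (mod t)`, `t` divides both
`q^d + 1` and `q^2 - q - 1`. -/
theorem stmt_9 (d : ℕ) (hd : 2 ≤ d) (t : ℕ) (ht : 0 < t)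
    (htdvd : (t : ℤ) ∣ (Nat.fib (d + 1) : ℤ) + (Nat.fib (d - 1) : ℤ) + 1 + (-1) ^ d)
    (hcop : Nat.gcd t (Nat.fib d) = 1) :
    ∀ q : ℤ, (t : ℤ) ∣ (Nat.fib d : ℤ) * q + (Nat.fib (d - 1) : ℤ) + 1 →
      (t : ℤ) ∣ q ^ d + 1 ∧ (t : ℤ) ∣ q ^ 2 - q - 1 := by
  obtain ⟨n, rfl⟩ := Nat.exists_eq_add_of_le' (Nat.one_le_of_lt hd)
  exact fun q hq ↦ stmt_9_general htdvd (Nat.isCoprime_iff_coprime.mpr hcop) hq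
end

section
/- Let d ≥ 2 be an integer. Suppose that every prime divisor of F_d and every prime divisor of F_{d+1} + F_{d-1} + 1 + (-1)^d is congruent to 2 or 3 modulo 5 (i.e., ≡ ±2 (mod 5)). Then gcd(q^d + 1, q^2 - q - 1) = 1 for every integer q ≥ 2. -/
/-!
Modulo a prime `p` dividing both numbers, `x = q` and `y = 1 - q` are the two roots of
`X ^ 2 - X - 1`, so that `(x ^ d + 1) * (y ^ d + 1) = L_d + 1 + (-1) ^ d`, where
`L_d = F_{d+1} + F_{d-1} = x ^ d + y ^ d` is the `d`-th Lucas number. As `x ^ d + 1 = 0`, the prime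
`p` divides `L_d + 1 + (-1) ^ d`. On the other hand `5 = (2 * x - 1) ^ 2` is a square modulo `p`,
and by quadratic reciprocity this rules out `p ≡ ±2 (mod 5)`.
-/

theorem pow_succ_eq_fib_succ_mul_add_fib {R : Type*} [Semiring R] {x : R} (hx : x ^ 2 = x + 1)
    (n : ℕ) : x ^ (n + 1) = Nat.fib (n + 1) * x + Nat.fib n := by
  induction n with
  | zero => simp
  | succ n ih =>
    calc x ^ (n + 1 + 1) = (Nat.fib (n + 1) * x + Nat.fib n) * x := by rw [pow_succ, ih]
      _ = Nat.fib (n + 1) * x ^ 2 + Nat.fib n * x := by rw [add_mul, mul_assoc, sq]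
      _ = (Nat.fib n + Nat.fib (n + 1)) * x + Nat.fib (n + 1) := by
        rw [hx, mul_add, add_mul, mul_one]; abel
      _ = Nat.fib (n + 1 + 1) * x + Nat.fib (n + 1) := by rw [Nat.fib_add_two, Nat.cast_add]

section Ring

variable {R : Type*} [Ring R] {x : R}

theorem one_sub_sq_eq_one_sub_add_one (hx : x ^ 2 = x + 1) : (1 - x) ^ 2 = (1 - x) + 1 :=
  calc (1 - x) ^ 2 = 1 - 2 * x + x ^ 2 := by noncomm_ring
    _ = (1 - x) + 1 := by rw [hx]; noncomm_ring

theorem pow_succ_add_one_sub_pow_succ_eq_fib_add_fib (hx : x ^ 2 = x + 1) (n : ℕ) :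
    x ^ (n + 1) + (1 - x) ^ (n + 1) = Nat.fib (n + 2) + Nat.fib n := by
  rw [pow_succ_eq_fib_succ_mul_add_fib hx,
    pow_succ_eq_fib_succ_mul_add_fib (one_sub_sq_eq_one_sub_add_one hx), Nat.fib_add_two,
    Nat.cast_add, mul_sub, mul_one]
  abel

theorem pow_mul_one_sub_pow_eq_neg_one_pow (hx : x ^ 2 = x + 1) (n : ℕ) :
    x ^ n * (1 - x) ^ n = (-1) ^ n := by
  have hcomm : Commute x (1 - x) := (Commute.one_right x).sub_right (Commute.refl x)
  have hprod : x * (1 - x) = -1 := by rw [mul_sub, mul_one, ← sq, hx, sub_add_cancel_left]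
  rw [← hcomm.mul_pow, hprod]

theorem pow_succ_add_one_mul_one_sub_pow_succ_add_one (hx : x ^ 2 = x + 1) (n : ℕ) :
    (x ^ (n + 1) + 1) * ((1 - x) ^ (n + 1) + 1) =
      Nat.fib (n + 2) + Nat.fib n + 1 + (-1) ^ (n + 1) := by
  rw [← pow_succ_add_one_sub_pow_succ_eq_fib_add_fib hx,
    ← pow_mul_one_sub_pow_eq_neg_one_pow hx (n + 1)]
  noncomm_ring

theorem isSquare_five_of_sq_eq_add_one (hx : x ^ 2 = x + 1) : IsSquare (5 : R) := by
  refine ⟨2 * x - 1, ?_⟩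
  have hdiff : x ^ 2 - x = 1 := sub_eq_iff_eq_add'.mpr hx
  calc (5 : R) = 4 * (x ^ 2 - x) + 1 := by rw [hdiff]; norm_num
    _ = (2 * x - 1) * (2 * x - 1) := by noncomm_ring

end Ring

theorem not_isSquare_natCast_zmod_five_iff (n : ℕ) :
    ¬IsSquare (n : ZMod 5) ↔ n % 5 = 2 ∨ n % 5 = 3 := by
  rw [← ZMod.natCast_mod n 5]
  have hlt : n % 5 < 5 := Nat.mod_lt n (by norm_num)
  interval_cases n % 5 <;> decide

theorem isSquare_natCast_zmod_five_of_sq_eq_add_one {p : ℕ} [Fact p.Prime] {x : ZMod p}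
    (hx : x ^ 2 = x + 1) : IsSquare (p : ZMod 5) := by
  have hp2 : p ≠ 2 := by
    rintro rfl
    exact one_ne_zero (left_eq_add.mp ((ZMod.pow_card x).symm.trans hx))
  have : Fact (Nat.Prime 5) := ⟨Nat.prime_five⟩
  rw [ZMod.exists_sq_eq_prime_iff_of_mod_four_eq_one (by norm_num) hp2]
  exact_mod_cast isSquare_five_of_sq_eq_add_one hx

theorem stmt_15_general (d : ℕ) (hd : d ≠ 0)
    (h : ∀ t : ℕ, t.Prime →
      (t : ℤ) ∣ (Nat.fib (d + 1) : ℤ) + (Nat.fib (d - 1) : ℤ) + 1 + (-1) ^ d →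
      t % 5 = 2 ∨ t % 5 = 3) (q : ℤ) :
    Int.gcd (q ^ d + 1) (q ^ 2 - q - 1) = 1 := by
  obtain ⟨n, rfl⟩ := Nat.exists_eq_succ_of_ne_zero hd
  by_contra hgcd
  obtain ⟨p, hp, hpgcd⟩ := Nat.exists_prime_and_dvd hgcd
  have : Fact p.Prime := ⟨hp⟩
  obtain ⟨hpow, hroot⟩ := Int.dvd_coe_gcd_iff.mp (Int.natCast_dvd_natCast.mpr hpgcd)
  have hpow_zmod : (q : ZMod p) ^ (n + 1) + 1 = 0 := by
    exact_mod_cast (ZMod.intCast_zmod_eq_zero_iff_dvd _ p).mpr hpow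
  have hroot_zmod : (q : ZMod p) ^ 2 = q + 1 := by
    have hzero := (ZMod.intCast_zmod_eq_zero_iff_dvd _ p).mpr hroot
    push_cast at hzero
    linear_combination hzero
  have hdvd : (p : ℤ) ∣ Nat.fib (n + 2) + Nat.fib n + 1 + (-1) ^ (n + 1) := by
    rw [← ZMod.intCast_zmod_eq_zero_iff_dvd]
    push_cast
    rw [← pow_succ_add_one_mul_one_sub_pow_succ_add_one hroot_zmod, hpow_zmod, zero_mul]
  exact (not_isSquare_natCast_zmod_five_iff p).mpr (h p hp hdvd)
    (isSquare_natCast_zmod_five_of_sq_eq_add_one hroot_zmod)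

/-- If all prime divisors of `F_d` and of `F_{d+1} + F_{d-1} + 1 + (-1)^d`
are `≡ ±2 (mod 5)`, then `gcd(q^d + 1, q^2 - q - 1) = 1` for all integers `q ≥ 2`. -/
theorem stmt_15 (d : ℕ) (hd : 2 ≤ d)
    (h1 : ∀ t : ℕ, t.Prime → t ∣ Nat.fib d → t % 5 = 2 ∨ t % 5 = 3)
    (h2 : ∀ t : ℕ, t.Prime →
      (t : ℤ) ∣ (Nat.fib (d + 1) : ℤ) + (Nat.fib (d - 1) : ℤ) + 1 + (-1) ^ d →
      t % 5 = 2 ∨ t % 5 = 3) :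
    ∀ q : ℤ, 2 ≤ q → Int.gcd (q ^ d + 1) (q ^ 2 - q - 1) = 1 :=
  fun q _ => stmt_15_general d (by lia) h2 q
end
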